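/- arXiv:2403.04163 — 2 statements merged into one kernel-verified Lean document; each statement's English description precedes it below -/
import Mathlib

section
/- In a Floquet code with measurement sequence M = {m_1,…,m_l} repeated cyclically, starting from the trivial stabilizer group, the instantaneous stabilizer group after measuring m_i in cycle j is a subgroup of the instantaneous stabilizer group after measuring m_i in cycle j+1: ⟨S_j^{(i)}⟩ ⊆ ⟨S_{j+1}^{(i)}⟩ for all i ≤ l and all cycles j ≥ 1. -/
abbrev PauliVec (n : ℕ) := (Fin n → ZMod 2) × (Fin n → ZMod 2)

def sympl {n : ℕ} (v w : PauliVec n) : ZMod 2 :=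
  ∑ i, (v.1 i * w.2 i + v.2 i * w.1 i)

/-- The symplectic product with a fixed `m`, as a linear map. -/
def symplMap {n : ℕ} (m : PauliVec n) : PauliVec n →ₗ[ZMod 2] ZMod 2 where
  toFun v := sympl v m
  map_add' v w := by
    simp only [sympl, Prod.fst_add, Prod.snd_add, Pi.add_apply]
    rw [← Finset.sum_add_distrib]
    exact Finset.sum_congr rfl fun i _ => by ring
  map_smul' c v := by
    simp only [sympl, Prod.smul_fst, Prod.smul_snd, Pi.smul_apply, smul_eq_mul,
      RingHom.id_apply, Finset.mul_sum]
    exact Finset.sum_congr rfl fun i _ => by ring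

/-- The symplectic complement of a single Pauli `m` (operators commuting with it). -/
def perp {n : ℕ} (m : PauliVec n) : Submodule (ZMod 2) (PauliVec n) :=
  LinearMap.ker (symplMap m)

open Submodule in
/-- Update of an instantaneous stabilizer group under measurement of the Pauli `m`:
the commuting part of `S` survives and `m` is adjoined.  This simultaneously
covers all three stabilizer update rules. -/
def measUpdate {n : ℕ} (S : Submodule (ZMod 2) (PauliVec n)) (m : PauliVec n) :
    Submodule (ZMod 2) (PauliVec n) :=
  (S ⊓ perp m) ⊔ span (ZMod 2) {m}

/-- Run a sequence of measurements starting from the stabilizer group `S`. -/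
def runSeq {n : ℕ} (ms : List (PauliVec n)) (S : Submodule (ZMod 2) (PauliVec n)) :
    Submodule (ZMod 2) (PauliVec n) :=
  ms.foldl measUpdate S

/-- The instantaneous stabilizer group after `j` complete cycles of the periodic
measurement sequence `M`, starting from the trivial stabilizer group. -/
def cycISG {n : ℕ} (M : List (PauliVec n)) (j : ℕ) :
    Submodule (ZMod 2) (PauliVec n) :=
  runSeq ((List.replicate j M).flatten) ⊥

/-!
Each measurement update is a monotone self-map of the lattice of stabilizer groups, hence so is a
full cycle of measurements. The groups reached after complete cycles are the iterates of this map
on the least element `⊥`, so they ascend; running the same first `i` measurements of the next cycle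
preserves the inclusion.
-/

section

variable {n : ℕ}

theorem measUpdate_mono (m : PauliVec n) : Monotone fun S ↦ measUpdate S m :=
  fun _ _ h ↦ sup_le_sup_right (inf_le_inf_right (perp m) h) _

theorem runSeq_mono (ms : List (PauliVec n)) : Monotone (runSeq ms) :=
  List.foldl_monotone measUpdate_mono ms

theorem runSeq_append (ms ms' : List (PauliVec n)) (S : Submodule (ZMod 2) (PauliVec n)) :
    runSeq (ms ++ ms') S = runSeq ms' (runSeq ms S) :=
  List.foldl_append

theorem runSeq_flatten_replicate (M : List (PauliVec n)) (j : ℕ)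
    (S : Submodule (ZMod 2) (PauliVec n)) :
    runSeq (List.replicate j M).flatten S = (runSeq M)^[j] S := by
  induction j generalizing S with
  | zero => rfl
  | succ j ih =>
    rw [List.replicate_succ, List.flatten_cons, runSeq_append, ih, Function.iterate_succ_apply]

theorem cycISG_eq_iterate (M : List (PauliVec n)) : cycISG M = fun j ↦ (runSeq M)^[j] ⊥ :=
  funext fun j ↦ runSeq_flatten_replicate M j ⊥

theorem cycISG_mono (M : List (PauliVec n)) : Monotone (cycISG M) := by
  rw [cycISG_eq_iterate]
  exact (runSeq_mono M).monotone_iterate_of_le_map bot_le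

end

/-- Floquet monotonicity: in a Floquet code with cycle `M`, the ISG
after measuring `m_i` in cycle `j` is contained in the ISG after measuring `m_i`
in cycle `j+1`:  `⟨S_j^{(i)}⟩ ⊆ ⟨S_{j+1}^{(i)}⟩` for all `i ≤ l`, `j ≥ 1`. -/
theorem floquet_isg_monotone {n : ℕ} (M : List (PauliVec n)) (i j : ℕ)
    (hi : i ≤ M.length) (hj : 1 ≤ j) :
    runSeq (M.take i) (cycISG M (j - 1)) ≤ runSeq (M.take i) (cycISG M j) :=
  runSeq_mono (M.take i) (cycISG_mono M (j.sub_le 1))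
end

section
/- In a Floquet code, if the stabilizer group gains k new independent generators during cycle j+1 compared to cycle j (i.e., dim⟨S_{j+1}^{(0)}⟩ − dim⟨S_j^{(0)}⟩ = k), then at most k new independent generators can be added in cycle j+2; moreover, the dimension can only increase at measurement m_i in cycle j+1 if it also increased at measurement m_i in cycle j. -/
/-- The stabilizer group's dimension increases at the `i`-th measurement of
cycle `c` (`c ≥ 1`, cycle `c` applies `M` to the group after `c-1` cycles). -/
def incrAt {n : ℕ} (M : List (PauliVec n)) (c i : ℕ) : Prop :=
  Module.finrank (ZMod 2) ↥(runSeq (M.take i) (cycISG M (c - 1))) =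
    Module.finrank (ZMod 2) ↥(runSeq (M.take (i - 1)) (cycISG M (c - 1))) + 1

/-!
Between two isotropic subspaces `S ≤ T`, a measurement that enlarges `T` also enlarges `S`: it does
so exactly when `m` is orthogonal to the subspace and does not lie in it, and both conditions pass
to smaller subspaces. In every other case the dimension is unchanged, since an `m` that is not
orthogonal to `S` only takes the place of the one dimension lost in `S ⊓ mᗮ`. Measuring is monotone
in the subspace, so each cycle starts from a larger subspace than the cycle before and grows at
no further measurements. None of this is special to qubits: any alternating form will do.
-/

open Module

section LinearAlgebra

variable {K V : Type*} [Field K] [AddCommGroup V] [Module K V]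

theorem finrank_inf_ker_add_one (S : Submodule K V) [FiniteDimensional K S] {f : Dual K V}
    (hf : ¬S ≤ LinearMap.ker f) :
    finrank K ↥(S ⊓ LinearMap.ker f) + 1 = finrank K S := by
  have restrict_ne_zero : f.domRestrict S ≠ 0 := fun h ↦
    hf fun v hv ↦ LinearMap.congr_fun h ⟨v, hv⟩
  have finrank_ker_restrict :
      finrank K (LinearMap.ker (f.domRestrict S)) = finrank K ↥(S ⊓ LinearMap.ker f) := by
    rw [LinearMap.ker_domRestrict, ← Submodule.map_comap_subtype, Submodule.finrank_map_subtype_eq]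
  rw [← finrank_ker_restrict, Dual.finrank_ker_add_one_of_ne_zero restrict_ne_zero]

theorem finrank_sup_span_singleton_of_notMem {S : Submodule K V} [FiniteDimensional K S] {m : V}
    (hm : m ∉ S) : finrank K ↥(S ⊔ Submodule.span K {m}) = finrank K S + 1 := by
  have m_ne_zero : m ≠ 0 := fun h ↦ hm (h ▸ S.zero_mem)
  have disjoint : S ⊓ Submodule.span K {m} = ⊥ :=
    (Submodule.disjoint_span_singleton_of_notMem hm).eq_bot
  have finrank_add := Submodule.finrank_sup_add_finrank_inf_eq S (Submodule.span K {m})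
  rwa [disjoint, finrank_bot, add_zero, finrank_span_singleton m_ne_zero] at finrank_add

end LinearAlgebra

namespace Floquet

variable {K V : Type*} [Field K] [AddCommGroup V] [Module K V] {B : LinearMap.BilinForm K V}
  {S T : Submodule K V} {m : V}

/-- Isotropic subspaces, the linear counterpart of abelian groups of Pauli operators. -/
def IsIsotropic (B : LinearMap.BilinForm K V) (S : Submodule K V) : Prop :=
  S ≤ B.orthogonal S

/-- The stabilizer update `measUpdate` for an arbitrary bilinear form. -/
def update (B : LinearMap.BilinForm K V) (S : Submodule K V) (m : V) : Submodule K V :=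
  (S ⊓ LinearMap.ker (B m)) ⊔ Submodule.span K {m}

/-- The stabilizer evolution `runSeq` for an arbitrary bilinear form. -/
def run (B : LinearMap.BilinForm K V) (ms : List V) (S : Submodule K V) : Submodule K V :=
  ms.foldl (update B) S

/-- The group `cycISG` after `j` cycles, for an arbitrary bilinear form. -/
def cycle (B : LinearMap.BilinForm K V) (M : List V) (j : ℕ) : Submodule K V :=
  run B (List.replicate j M).flatten ⊥

/-- The dimension increase `incrAt` for an arbitrary bilinear form, with cycles and measurements
both numbered from `0`. -/
def GrowsAt (B : LinearMap.BilinForm K V) (M : List V) (c i : ℕ) : Prop :=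
  finrank K (run B (M.take (i + 1)) (cycle B M c)) = finrank K (run B (M.take i) (cycle B M c)) + 1

/-- The paper's criterion for dimension growth: `m` commutes with all of `S` and is independent
of it. -/
def IsNewGenerator (B : LinearMap.BilinForm K V) (S : Submodule K V) (m : V) : Prop :=
  S ≤ LinearMap.ker (B m) ∧ m ∉ S

theorem IsNewGenerator.anti (hST : S ≤ T) (hm : IsNewGenerator B T m) : IsNewGenerator B S m :=
  ⟨hST.trans hm.1, fun h ↦ hm.2 (hST h)⟩

theorem isIsotropic_bot : IsIsotropic B ⊥ :=
  bot_le

theorem IsIsotropic.le_ker (hS : IsIsotropic B S) (hm : m ∈ S) : S ≤ LinearMap.ker (B m) :=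
  fun _ hv ↦ hS hv m hm

theorem IsIsotropic.update (hB : B.IsAlt) (hS : IsIsotropic B S) (m : V) :
    IsIsotropic B (update B S m) := by
  intro w hw v hv
  obtain ⟨s, ⟨hs, hms⟩, _, ha, rfl⟩ := Submodule.mem_sup.1 hv
  obtain ⟨t, ⟨ht, hmt⟩, _, hb, rfl⟩ := Submodule.mem_sup.1 hw
  obtain ⟨a, rfl⟩ := Submodule.mem_span_singleton.1 ha
  obtain ⟨b, rfl⟩ := Submodule.mem_span_singleton.1 hb
  have hst : B s t = 0 := hS ht s hs
  have hmt : B m t = 0 := hmt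
  have hsm : B s m = 0 := hB.isRefl m s hms
  simp [hst, hmt, hsm, hB m]

theorem IsIsotropic.run (hB : B.IsAlt) (hS : IsIsotropic B S) (ms : List V) :
    IsIsotropic B (run B ms S) := by
  induction ms generalizing S with
  | nil => exact hS
  | cons m _ ih => exact ih (hS.update hB m)

theorem isIsotropic_cycle (hB : B.IsAlt) (M : List V) (j : ℕ) : IsIsotropic B (cycle B M j) :=
  isIsotropic_bot.run hB _

theorem update_mono (hST : S ≤ T) (m : V) : update B S m ≤ update B T m :=
  sup_le_sup_right (inf_le_inf_right _ hST) _

theorem run_mono (hST : S ≤ T) (ms : List V) : run B ms S ≤ run B ms T := by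
  induction ms generalizing S T with
  | nil => exact hST
  | cons m _ ih => exact ih (update_mono hST m)

theorem run_append (as bs : List V) (S : Submodule K V) :
    run B (as ++ bs) S = run B bs (run B as S) :=
  List.foldl_append

theorem cycle_succ (M : List V) (j : ℕ) : cycle B M (j + 1) = run B M (cycle B M j) := by
  rw [cycle, List.replicate_succ', List.flatten_concat, run_append, ← cycle]

theorem cycle_le_cycle_succ (M : List V) (j : ℕ) : cycle B M j ≤ cycle B M (j + 1) := by
  induction j with
  | zero => exact bot_le
  | succ j ih => simpa only [cycle_succ] using run_mono ih M

section Dimension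

instance [FiniteDimensional K S] : FiniteDimensional K (update B S m) :=
  inferInstanceAs (FiniteDimensional K ↥(S ⊓ LinearMap.ker (B m) ⊔ Submodule.span K {m}))

instance [hS : FiniteDimensional K S] (ms : List V) : FiniteDimensional K (run B ms S) := by
  induction ms generalizing S with
  | nil => exact hS
  | cons m _ ih => exact ih (S := update B S m)

instance (M : List V) (j : ℕ) : FiniteDimensional K (cycle B M j) :=
  inferInstanceAs (FiniteDimensional K (run B (List.replicate j M).flatten ⊥))

variable [FiniteDimensional K S]

theorem IsNewGenerator.finrank_update (hm : IsNewGenerator B S m) :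
    finrank K (update B S m) = finrank K S + 1 := by
  rw [update, inf_eq_left.2 hm.1, finrank_sup_span_singleton_of_notMem hm.2]

theorem IsIsotropic.finrank_update_of_not_isNewGenerator (hS : IsIsotropic B S)
    (hm : ¬IsNewGenerator B S m) : finrank K (Floquet.update B S m) = finrank K S := by
  by_cases hmS : m ∈ S
  · rw [Floquet.update, inf_eq_left.2 (hS.le_ker hmS),
      sup_eq_left.2 ((Submodule.span_singleton_le_iff_mem m S).2 hmS)]
  · have not_commuting : ¬S ≤ LinearMap.ker (B m) := fun h ↦ hm ⟨h, hmS⟩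
    rw [Floquet.update, finrank_sup_span_singleton_of_notMem (mt And.left hmS),
      finrank_inf_ker_add_one S not_commuting]

theorem IsIsotropic.finrank_update_eq_add_one_iff (hS : IsIsotropic B S) :
    finrank K (Floquet.update B S m) = finrank K S + 1 ↔ IsNewGenerator B S m := by
  refine ⟨fun h ↦ ?_, IsNewGenerator.finrank_update⟩
  by_contra hm
  rw [hS.finrank_update_of_not_isNewGenerator hm] at h
  exact absurd h (Nat.lt_succ_self _).ne

theorem IsIsotropic.finrank_le_finrank_update (hS : IsIsotropic B S) (m : V) :
    finrank K S ≤ finrank K (Floquet.update B S m) := by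
  by_cases hm : IsNewGenerator B S m
  · exact hm.finrank_update ▸ Nat.le_succ _
  · exact (hS.finrank_update_of_not_isNewGenerator hm).ge

variable [FiniteDimensional K T]

theorem finrank_update_add_finrank_le (hST : S ≤ T) (hS : IsIsotropic B S) (hT : IsIsotropic B T)
    (m : V) :
    finrank K (update B T m) + finrank K S ≤ finrank K (update B S m) + finrank K T := by
  by_cases hm : IsNewGenerator B T m
  · rw [hm.finrank_update, (hm.anti hST).finrank_update]
    omega
  · rw [hT.finrank_update_of_not_isNewGenerator hm, add_comm]
    exact Nat.add_le_add_right (hS.finrank_le_finrank_update m) _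

theorem finrank_run_add_finrank_le (hB : B.IsAlt) (hST : S ≤ T) (hS : IsIsotropic B S)
    (hT : IsIsotropic B T) (ms : List V) :
    finrank K (run B ms T) + finrank K S ≤ finrank K (run B ms S) + finrank K T := by
  induction ms generalizing S T with
  | nil => exact (add_comm _ _).le
  | cons m ms ih =>
    have head := finrank_update_add_finrank_le hST hS hT m
    have tail : finrank K (run B (m :: ms) T) + finrank K (update B S m) ≤
        finrank K (run B (m :: ms) S) + finrank K (update B T m) :=
      ih (update_mono hST m) (hS.update hB m) (hT.update hB m)
    omega

end Dimension

theorem growsAt_iff_isNewGenerator (hB : B.IsAlt) (M : List V) (c : ℕ) {i : ℕ}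
    (hi : i < M.length) :
    GrowsAt B M c i ↔ IsNewGenerator B (run B (M.take i) (cycle B M c)) M[i] := by
  rw [GrowsAt, List.take_succ_eq_append_getElem hi, run_append]
  exact ((isIsotropic_cycle hB M c).run hB _).finrank_update_eq_add_one_iff

theorem GrowsAt.of_succ (hB : B.IsAlt) {M : List V} {c i : ℕ} (hi : i < M.length)
    (h : GrowsAt B M (c + 1) i) : GrowsAt B M c i := by
  rw [growsAt_iff_isNewGenerator hB M _ hi] at h ⊢
  exact h.anti (run_mono (cycle_le_cycle_succ M c) _)

theorem finrank_cycle_add_finrank_cycle_le (hB : B.IsAlt) (M : List V) (j : ℕ) :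
    finrank K (cycle B M (j + 2)) + finrank K (cycle B M j) ≤
      finrank K (cycle B M (j + 1)) + finrank K (cycle B M (j + 1)) := by
  have growth := finrank_run_add_finrank_le hB (cycle_le_cycle_succ M j) (isIsotropic_cycle hB M j)
    (isIsotropic_cycle hB M (j + 1)) M
  rwa [← cycle_succ, ← cycle_succ] at growth

end Floquet

theorem sympl_comm {n : ℕ} (v w : PauliVec n) : sympl v w = sympl w v := by
  rw [sympl, sympl]
  exact Finset.sum_congr rfl fun i _ ↦ by ring

theorem sympl_self {n : ℕ} (v : PauliVec n) : sympl v v = 0 := by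
  rw [sympl]
  exact Finset.sum_eq_zero fun i _ ↦ by rw [mul_comm (v.2 i), CharTwo.add_self_eq_zero]

theorem symplMap_apply_comm {n : ℕ} (v w : PauliVec n) : symplMap v w = symplMap w v :=
  sympl_comm w v

/-- The symplectic product `sympl` as a bilinear form, arranged so that `perp m` is the kernel of
`symplForm n m`. -/
def symplForm (n : ℕ) : LinearMap.BilinForm (ZMod 2) (PauliVec n) where
  toFun := symplMap
  map_add' u v := LinearMap.ext fun w ↦ by
    simp only [LinearMap.add_apply, symplMap_apply_comm _ w, map_add]
  map_smul' c v := LinearMap.ext fun w ↦ by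
    simp only [LinearMap.smul_apply, symplMap_apply_comm _ w, map_smul, RingHom.id_apply]

theorem isAlt_symplForm (n : ℕ) : (symplForm n).IsAlt :=
  sympl_self

open Floquet in
theorem floquet_growth_bound_general {K V : Type*} [Field K] [AddCommGroup V] [Module K V]
    {B : LinearMap.BilinForm K V} (hB : B.IsAlt) (M : List V) (j k : ℕ)
    (h : finrank K (cycle B M (j + 1)) = finrank K (cycle B M j) + k) :
    finrank K (cycle B M (j + 2)) ≤ finrank K (cycle B M (j + 1)) + k ∧
      ∀ c i, i < M.length → GrowsAt B M (c + 1) i → GrowsAt B M c i := by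
  have bound := finrank_cycle_add_finrank_cycle_le hB M j
  exact ⟨by omega, fun c i hi ↦ GrowsAt.of_succ hB hi⟩

/-- if the stabilizer group of a Floquet code gains `k` new
independent generators during a cycle, then at most `k` new independent
generators can be added in the next cycle; moreover the dimension can only
increase at measurement `m_i` of a cycle if it also increased at `m_i` in the
previous cycle. -/
theorem floquet_growth_bound {n : ℕ} (M : List (PauliVec n)) (j k : ℕ)
    (h : Module.finrank (ZMod 2) ↥(cycISG M (j + 1)) =
      Module.finrank (ZMod 2) ↥(cycISG M j) + k) :
    Module.finrank (ZMod 2) ↥(cycISG M (j + 2)) ≤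
      Module.finrank (ZMod 2) ↥(cycISG M (j + 1)) + k ∧
    (∀ c i, 1 ≤ c → 1 ≤ i → i ≤ M.length → incrAt M (c + 1) i → incrAt M c i) := by
  obtain ⟨bound, growsAt⟩ := floquet_growth_bound_general (isAlt_symplForm n) M j k h
  exact ⟨bound, fun | c + 1, i + 1, _, _, hi => growsAt c i hi⟩
end
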